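/- arXiv:1104.4503 — 2 statements merged into one kernel-verified Lean document; each statement's English description precedes it below -/
import Mathlib

section
/- Let s ≥ 3 and let r_1 ≥ r_2 ≥ … ≥ r_s ≥ 2 be integers each dividing 4, and let G be an elementary abelian 2-group of order r_1·r_2⋯r_s. Then every logarithmic signature for G of type (r_1,…,r_s) has at least one periodic block; i.e., there is no aperiodic logarithmic signature for G of type (r_1,…,r_s). -/
/-- A subset `B` of a group is periodic if some `g ≠ 1` satisfies `g • B = B`. -/
def IsPeriodic {G : Type*} [Group G] [DecidableEq G] (B : Finset G) : Prop :=
  ∃ g : G, g ≠ 1 ∧ B.image (fun b => g * b) = B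

/-- `B` is a logarithmic signature for `G`: every element of `G` has a unique ordered
factorization with one factor from each block. -/
def IsLogSig {G : Type*} [Group G] {s : ℕ} (B : Fin s → Finset G) : Prop :=
  ∀ g : G, ∃! f : Fin s → G, (∀ i, f i ∈ B i) ∧ (List.ofFn f).prod = g

/-!
A block of two elements is always periodic, and a block of four is periodic as soon as the product
of its elements is `1`, so assume that all `s` blocks have four elements. Write the group
additively as an `𝔽₂`-space `V` of dimension `2s` and consider the space `Z ⊆ (𝔽₂⁴)ˢ` of linear
relations among the block elements in which every block contributes an even number of terms. By
rank-nullity, `dim Z ≥ s`. An even-weight vector of `𝔽₂⁴` other than `1111` is a sum of two unit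
vectors, so a nonzero relation with no coordinate `1111` would give one element two
factorizations; hence every nonzero member of `Z` has a coordinate `1111`. A counting argument in
the spirit of the theorem of Hajós then shows that some member of `Z` is `1111` in one coordinate
and `0` in all others: the elements of that block sum to zero.
-/

section ConstantCoordinates

variable {K ι κ : Type*} [DivisionRing K]

/-- Every nonzero member of `Z` has a coordinate which is a nonzero constant function, encoded by a
scalar carrying it to `1`. In the theorem of Hajós on lattice tilings by cubes, the analogous
property is that every nonzero lattice vector has a nonzero integer coordinate. -/
def HasConstantCoordinates (Z : Submodule K (ι → κ → K)) : Prop :=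
  ∀ z ∈ Z, z ≠ 0 → ∃ i, ∃ c : K, c • z i = 1

/-- Among the coordinates in `S`, the tuple `z` is nonzero only at `i`, where it is constantly `1`;
each coordinate `j` outside `S` vanishes at the prescribed point `w j`. Members of `Z` of this kind
are found by induction on `S`. -/
structure IsIsolatedAt (S : Finset ι) (w : ι → κ) (i : ι) (z : ι → κ → K) : Prop where
  mem : i ∈ S
  eq_one : z i = 1
  eq_zero : ∀ j ∈ S, j ≠ i → z j = 0
  apply_eq_zero : ∀ j ∉ S, z j (w j) = 0

variable {Z : Submodule K (ι → κ → K)} {S : Finset ι} {w : ι → κ} {i i' j : ι} {k k' : κ}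
  {z z' : ι → κ → K}

lemma HasConstantCoordinates.eq_zero_of_forall_exists_apply_eq_zero
    (hZ : HasConstantCoordinates Z) (hz : z ∈ Z) (h : ∀ i, ∃ k, z i k = 0) : z = 0 := by
  by_contra hne
  obtain ⟨i, c, hc⟩ := hZ z hz hne
  obtain ⟨k, hk⟩ := h i
  simpa [hk] using congrFun hc k

lemma HasConstantCoordinates.exists_smul_eq_one_of_forall_ne (hZ : HasConstantCoordinates Z)
    (hz : z ∈ Z) (hne : z ≠ 0) (h : ∀ j ≠ i, ∃ k, z j k = 0) : ∃ c : K, c • z i = 1 := by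
  obtain ⟨j, c, hc⟩ := hZ z hz hne
  obtain rfl : j = i := by
    by_contra hji
    obtain ⟨k, hk⟩ := h j hji
    simpa [hk] using congrFun hc k
  exact ⟨c, hc⟩

/-- Evaluation at the points `w j` embeds `Z` into `ι → K`, hence is onto by dimension, and a
preimage of the `i`-th unit vector is constant at `i`. -/
lemma HasConstantCoordinates.exists_isIsolatedAt_singleton [Fintype ι]
    (hZ : HasConstantCoordinates Z) (hdim : Fintype.card ι ≤ Module.finrank K Z) (i : ι)
    (w : ι → κ) : ∃ z ∈ Z, IsIsolatedAt {i} w i z := by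
  classical
  let eval : Z →ₗ[K] ι → K :=
    (LinearMap.pi fun j => LinearMap.proj (w j) ∘ₗ LinearMap.proj j) ∘ₗ Z.subtype
  have eval_apply (z : Z) (j : ι) : eval z j = z.1 j (w j) := rfl
  have eval_injective : Function.Injective eval := by
    refine (injective_iff_map_eq_zero eval).mpr fun z hz => Subtype.ext ?_
    exact hZ.eq_zero_of_forall_exists_apply_eq_zero z.2 fun j => ⟨w j, congrFun hz j⟩
  have : FiniteDimensional K Z := Module.Finite.of_injective eval eval_injective
  have hfinrank : Module.finrank K Z = Module.finrank K (ι → K) :=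
    (LinearMap.finrank_le_finrank_of_injective eval_injective).antisymm (by simpa using hdim)
  obtain ⟨z, hz⟩ := (LinearMap.injective_iff_surjective_of_finrank_eq_finrank hfinrank).mp
    eval_injective (Pi.single i 1)
  have apply_self : z.1 i (w i) = 1 := by rw [← eval_apply, hz, Pi.single_eq_same]
  have apply_of_ne (j : ι) (hj : j ≠ i) : z.1 j (w j) = 0 := by
    rw [← eval_apply, hz, Pi.single_eq_of_ne hj]
  obtain ⟨c, hc⟩ := hZ.exists_smul_eq_one_of_forall_ne z.2
    (fun h => by simp [h] at apply_self) fun j hj => ⟨w j, apply_of_ne j hj⟩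
  obtain rfl : c = 1 := by simpa [apply_self] using congrFun hc (w i)
  refine ⟨z, z.2, Finset.mem_singleton_self i, by simpa using hc, ?_, ?_⟩
  · exact fun j hj hji => absurd (Finset.mem_singleton.mp hj) hji
  · exact fun j hj => apply_of_ne j (by simpa using hj)

lemma IsIsolatedAt.smul_of_eq_one (c : K) (hi : i ∈ S) (hc : c • z i = 1)
    (h0 : ∀ j ∈ S, j ≠ i → z j = 0) (hw : ∀ j ∉ S, z j (w j) = 0) :
    IsIsolatedAt S w i (c • z) where
  mem := hi
  eq_one := hc
  eq_zero j hj hji := by simp [h0 j hj hji]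
  apply_eq_zero j hj := by simp [hw j hj]

section Erase

variable [DecidableEq ι]

section

variable (h : IsIsolatedAt (S.erase i) (Function.update w i k) j z)
include h

lemma IsIsolatedAt.ne_of_erase : j ≠ i :=
  Finset.ne_of_mem_erase h.mem

lemma IsIsolatedAt.apply_eq_zero_of_erase : z i k = 0 := by
  simpa using h.apply_eq_zero i (Finset.notMem_erase i S)

lemma IsIsolatedAt.apply_eq_zero_of_notMem (hi : i ∈ S) {l : ι} (hl : l ∉ S) : z l (w l) = 0 := by
  have hli : l ≠ i := fun hli => hl (hli ▸ hi)
  simpa [hli] using h.apply_eq_zero l fun hl' => hl (Finset.mem_of_mem_erase hl')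

lemma IsIsolatedAt.eq_zero_of_erase {l : ι} (hl : l ∈ S) (hli : l ≠ i) (hlj : l ≠ j) : z l = 0 :=
  h.eq_zero l (Finset.mem_erase.mpr ⟨hli, hl⟩) hlj

lemma IsIsolatedAt.of_erase (hi : i ∈ S) (h0 : z i = 0) : IsIsolatedAt S w j z where
  mem := Finset.mem_of_mem_erase h.mem
  eq_one := h.eq_one
  eq_zero l hl hlj := by
    obtain rfl | hli := eq_or_ne l i
    · exact h0
    · exact h.eq_zero_of_erase hl hli hlj
  apply_eq_zero _ hl := h.apply_eq_zero_of_notMem hi hl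

/-- The difference `z - z'` vanishes on `S` except at `i`, where it is nonzero. -/
lemma IsIsolatedAt.exists_isIsolatedAt_of_apply_ne_zero (hZ : HasConstantCoordinates Z)
    (hz : z ∈ Z) (hz' : z' ∈ Z) (hi : i ∈ S)
    (h' : IsIsolatedAt (S.erase i) (Function.update w i k') j z') (hk' : z i k' ≠ 0) :
    ∃ y ∈ Z, IsIsolatedAt S w i y := by
  have sub_mem : z - z' ∈ Z := Z.sub_mem hz hz'
  have sub_ne_zero : z - z' ≠ 0 := fun h0 =>
    hk' (by rw [sub_eq_zero.mp h0, h'.apply_eq_zero_of_erase])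
  have sub_eq_zero_of_mem : ∀ l ∈ S, l ≠ i → (z - z') l = 0 := by
    intro l hl hli
    obtain rfl | hlj := eq_or_ne l j
    · simp [h.eq_one, h'.eq_one]
    · simp [h.eq_zero_of_erase hl hli hlj, h'.eq_zero_of_erase hl hli hlj]
  have sub_apply_eq_zero : ∀ l ∉ S, (z - z') l (w l) = 0 := fun l hl => by
    simp [h.apply_eq_zero_of_notMem hi hl, h'.apply_eq_zero_of_notMem hi hl]
  obtain ⟨c, hc⟩ := hZ.exists_smul_eq_one_of_forall_ne sub_mem sub_ne_zero fun l hli => by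
    by_cases hl : l ∈ S
    · exact ⟨w l, by rw [sub_eq_zero_of_mem l hl hli, Pi.zero_apply]⟩
    · exact ⟨w l, sub_apply_eq_zero l hl⟩
  exact ⟨c • (z - z'), Z.smul_mem c sub_mem,
    .smul_of_eq_one c hi hc sub_eq_zero_of_mem sub_apply_eq_zero⟩

/-- Each coordinate of `z - z'` vanishes somewhere, so `z = z'`. -/
lemma IsIsolatedAt.of_erase_of_erase (hZ : HasConstantCoordinates Z) (hz : z ∈ Z) (hz' : z' ∈ Z)
    (hi : i ∈ S) (hi' : i' ∈ S) (hii' : i ≠ i')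
    (h' : IsIsolatedAt (S.erase i') (Function.update w i' k') j z') : IsIsolatedAt S w j z := by
  have apply_i : z' i = 0 := h'.eq_zero_of_erase hi hii' h.ne_of_erase.symm
  have apply_i' : z i' = 0 := h.eq_zero_of_erase hi' hii'.symm h'.ne_of_erase.symm
  have hzz' : z - z' = 0 := by
    refine hZ.eq_zero_of_forall_exists_apply_eq_zero (Z.sub_mem hz hz') fun l => ?_
    obtain rfl | hli := eq_or_ne l i
    · exact ⟨k, by simp [apply_i, h.apply_eq_zero_of_erase]⟩
    obtain rfl | hli' := eq_or_ne l i'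
    · exact ⟨k', by simp [apply_i', h'.apply_eq_zero_of_erase]⟩
    refine ⟨w l, ?_⟩
    by_cases hl : l ∈ S
    · obtain rfl | hlj := eq_or_ne l j
      · simp [h.eq_one, h'.eq_one]
      · simp [h.eq_zero_of_erase hl hli hlj, h'.eq_zero_of_erase hl hli' hlj]
    · simp [h.apply_eq_zero_of_notMem hi hl, h'.apply_eq_zero_of_notMem hi' hl]
  exact h.of_erase hi (by rw [sub_eq_zero.mp hzz', apply_i])

end

/-- Join `i` to `j` if some member of `Z` is isolated at `j` with respect to `S.erase i`. If nothing
is isolated with respect to `S`, then each `i` has two neighbours `j` while each `j` has at most one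
neighbour `i`, contradicting double counting. -/
lemma HasConstantCoordinates.exists_isIsolatedAt_of_erase
    (hZ : HasConstantCoordinates Z) (hS : S.Nonempty)
    (herase : ∀ i ∈ S, ∀ w : ι → κ, ∃ j, ∃ z ∈ Z, IsIsolatedAt (S.erase i) w j z) (w : ι → κ) :
    ∃ i, ∃ z ∈ Z, IsIsolatedAt S w i z := by
  classical
  by_contra! hno
  let Joined (i j : ι) : Prop :=
    ∃ k, ∃ z ∈ Z, IsIsolatedAt (S.erase i) (Function.update w i k) j z
  have two_le_card_right : ∀ i ∈ S, 2 ≤ (S.bipartiteAbove Joined i).card := by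
    intro i hi
    obtain ⟨j, z, hz, h⟩ := herase i hi (Function.update w i (w i))
    obtain ⟨k, hk⟩ : ∃ k, z i k ≠ 0 :=
      Function.ne_iff.mp fun h0 => hno j z hz (h.of_erase hi h0)
    obtain ⟨j', z', hz', h'⟩ := herase i hi (Function.update w i k)
    refine Finset.one_lt_card.mpr ⟨j, ?_, j', ?_, ?_⟩
    · exact (Finset.mem_bipartiteAbove _).mpr ⟨Finset.mem_of_mem_erase h.mem, w i, z, hz, h⟩
    · exact (Finset.mem_bipartiteAbove _).mpr ⟨Finset.mem_of_mem_erase h'.mem, k, z', hz', h'⟩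
    · rintro rfl
      obtain ⟨y, hy, hiso⟩ := h.exists_isIsolatedAt_of_apply_ne_zero hZ hz hz' hi h' hk
      exact hno i y hy hiso
  have card_left_le_one : ∀ j ∈ S, (S.bipartiteBelow Joined j).card ≤ 1 := by
    refine fun j _ => Finset.card_le_one.mpr fun i hij i' hij' => ?_
    obtain ⟨hi, k, z, hz, h⟩ := (Finset.mem_bipartiteBelow _).mp hij
    obtain ⟨hi', k', z', hz', h'⟩ := (Finset.mem_bipartiteBelow _).mp hij'
    by_contra hii'
    exact hno j z hz (h.of_erase_of_erase hZ hz hz' hi hi' hii' h')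
  have := Finset.card_mul_le_card_mul Joined two_le_card_right card_left_le_one
  have := hS.card_pos
  omega

end Erase

lemma HasConstantCoordinates.exists_isIsolatedAt [Fintype ι]
    (hZ : HasConstantCoordinates Z) (hdim : Fintype.card ι ≤ Module.finrank K Z)
    (hS : S.Nonempty) (w : ι → κ) : ∃ i, ∃ z ∈ Z, IsIsolatedAt S w i z := by
  classical
  induction S using Finset.strongInduction generalizing w with
  | H S ih =>
    obtain ⟨i, rfl⟩ | hnt := hS.exists_eq_singleton_or_nontrivial
    · exact ⟨i, hZ.exists_isIsolatedAt_singleton hdim i w⟩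
    · exact hZ.exists_isIsolatedAt_of_erase hS
        (fun i hi => ih (S.erase i) (Finset.erase_ssubset hi) hnt.erase_nonempty) w

theorem HasConstantCoordinates.exists_single_one_mem [Fintype ι] [DecidableEq ι] [Nonempty ι]
    [Nonempty κ] (hZ : HasConstantCoordinates Z) (hdim : Fintype.card ι ≤ Module.finrank K Z) :
    ∃ i, Pi.single i 1 ∈ Z := by
  obtain ⟨k⟩ := ‹Nonempty κ›
  obtain ⟨i, z, hz, h⟩ := hZ.exists_isIsolatedAt hdim Finset.univ_nonempty fun _ => k
  have hsingle : z = Pi.single i 1 := by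
    ext1 j
    obtain rfl | hj := eq_or_ne j i
    · rw [h.eq_one, Pi.single_eq_same]
    · rw [h.eq_zero j (Finset.mem_univ j) hj, Pi.single_eq_of_ne hj]
  exact ⟨i, hsingle ▸ hz⟩

end ConstantCoordinates

section BlockRelations

variable {K ι κ V : Type*} [Fintype ι] [Fintype κ] [AddCommGroup V]

/-- The linear relations among the vectors `x i m` whose coefficients sum to zero in each block
`x i`. The difference of two expressions of a vector as `∑ i, x i (p i)` is such a relation. -/
def blockRelations (K : Type*) [Ring K] [Module K V] (x : ι → κ → V) :
    Submodule K (ι → κ → K) where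
  carrier := {z | (∀ i, ∑ m, z i m = 0) ∧ ∑ i, ∑ m, z i m • x i m = 0}
  zero_mem' := by simp
  add_mem' := by
    rintro y z ⟨hy, hyx⟩ ⟨hz, hzx⟩
    simp [Finset.sum_add_distrib, add_smul, hy, hz, hyx, hzx]
  smul_mem' := by
    rintro c z ⟨hz, hzx⟩
    simp [← Finset.mul_sum, ← Finset.smul_sum, mul_smul, hz, hzx]

lemma mem_blockRelations [Ring K] [Module K V] {x : ι → κ → V} {z : ι → κ → K} :
    z ∈ blockRelations K x ↔ (∀ i, ∑ m, z i m = 0) ∧ ∑ i, ∑ m, z i m • x i m = 0 :=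
  Iff.rfl

lemma card_mul_card_le_finrank_blockRelations_add [DivisionRing K] [Module K V]
    [Module.Finite K V] (x : ι → κ → V) :
    Fintype.card ι * Fintype.card κ ≤
      Module.finrank K (blockRelations K x) + Module.finrank K V + Fintype.card ι := by
  let φ : (ι → κ → K) →ₗ[K] V × (ι → K) :=
    (∑ i, Fintype.linearCombination K (x i) ∘ₗ LinearMap.proj i).prod
      (LinearMap.pi fun i => (∑ m, LinearMap.proj m) ∘ₗ LinearMap.proj i)
  have hker : LinearMap.ker φ = blockRelations K x := by
    ext z
    simp [φ, mem_blockRelations, Fintype.linearCombination_apply, funext_iff, and_comm]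
  have hdim := LinearMap.finrank_range_add_finrank_ker φ
  have hrange := Submodule.finrank_le (LinearMap.range φ)
  rw [hker] at hdim
  simp only [Module.finrank_prod, Module.finrank_fintype_fun_eq_card,
    Module.finrank_pi_fintype, Finset.sum_const, Finset.card_univ, smul_eq_mul] at hdim hrange
  omega

end BlockRelations

section Factorization

lemma eq_one_or_exists_eq_single_add_single : ∀ v : Fin 4 → ZMod 2, ∑ m, v m = 0 →
    v = 1 ∨ ∃ p q, v = Pi.single p 1 + Pi.single q 1 := by
  decide +kernel

variable {ι V : Type*} [Fintype ι] [AddCommGroup V] [Module (ZMod 2) V] {x : ι → Fin 4 → V}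

lemma hasConstantCoordinates_blockRelations
    (hx : Function.Injective fun p : ι → Fin 4 => ∑ i, x i (p i)) :
    HasConstantCoordinates (blockRelations (ZMod 2) x) := by
  rintro z ⟨hsum, hrel⟩ hne
  by_contra! hconst
  have hpair (i : ι) : ∃ p q, z i = Pi.single p 1 + Pi.single q 1 :=
    (eq_one_or_exists_eq_single_add_single (z i) (hsum i)).resolve_left
      (by simpa using hconst i 1)
  choose p q hpq using hpair
  have hadd : ∑ i, x i (p i) + ∑ i, x i (q i) = 0 := by
    rw [← hrel, ← Finset.sum_add_distrib]
    refine Finset.sum_congr rfl fun i _ => ?_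
    simp [hpq, add_smul, Finset.sum_add_distrib, Pi.single_apply, ite_smul]
  have hpq' : p = q := hx (by rwa [add_eq_zero_iff_eq_neg, ZModModule.neg_eq_self] at hadd)
  refine hne (funext fun i => ?_)
  rw [hpq, hpq', ZModModule.add_self, Pi.zero_apply]

lemma finrank_eq_two_mul_card_of_bijective
    (hx : Function.Bijective fun p : ι → Fin 4 => ∑ i, x i (p i)) :
    Module.finrank (ZMod 2) V = 2 * Fintype.card ι := by
  have hcard := Nat.card_eq_of_bijective _ hx
  have : Finite V := Finite.of_surjective _ hx.surjective
  rw [Module.natCard_eq_pow_finrank (K := ZMod 2) (V := V)] at hcard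
  refine Nat.pow_right_injective le_rfl ?_
  simpa [Nat.card_fun, pow_mul] using hcard.symm

theorem exists_sum_eq_zero_of_bijective [Nonempty ι]
    (hx : Function.Bijective fun p : ι → Fin 4 => ∑ i, x i (p i)) : ∃ i, ∑ m, x i m = 0 := by
  classical
  have : Finite V := Finite.of_surjective _ hx.surjective
  have hdim : Fintype.card ι ≤ Module.finrank (ZMod 2) (blockRelations (ZMod 2) x) := by
    have := card_mul_card_le_finrank_blockRelations_add (K := ZMod 2) x
    rw [finrank_eq_two_mul_card_of_bijective hx, Fintype.card_fin] at this
    omega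
  obtain ⟨i, -, hi⟩ :=
    (hasConstantCoordinates_blockRelations hx.injective).exists_single_one_mem hdim
  refine ⟨i, ?_⟩
  rw [← hi, Finset.sum_eq_single i (fun j _ hj => by simp [hj]) (by simp)]
  simp

end Factorization

section Periodic

variable {G : Type*} [DecidableEq G]

lemma isPeriodic_of_forall_mul_mem [Group G] {B : Finset G} {g : G} (hg : g ≠ 1)
    (h : ∀ b ∈ B, g * b ∈ B) : IsPeriodic B :=
  ⟨g, hg, Finset.eq_of_subset_of_card_le (Finset.image_subset_iff.mpr h)
    (Finset.card_image_of_injective _ (mul_right_injective g)).ge⟩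

variable [CommGroup G] (hG : ∀ g : G, g * g = 1)
include hG

lemma isPeriodic_of_card_eq_two {B : Finset G} (hB : B.card = 2) : IsPeriodic B := by
  obtain ⟨a, b, hab, rfl⟩ := Finset.card_eq_two.mp hB
  refine isPeriodic_of_forall_mul_mem (g := a * b) ?_ ?_
  · exact fun h => hab (mul_right_cancel (h.trans (hG b).symm))
  · simp [mul_right_comm a b a, mul_assoc a b b, hG]

lemma isPeriodic_of_card_eq_four {B : Finset G} (hB : B.card = 4) (hprod : ∏ b ∈ B, b = 1) :
    IsPeriodic B := by
  have eq_of_mul_eq_one {a b : G} (h : a * b = 1) : a = b :=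
    mul_right_cancel (h.trans (hG b).symm)
  obtain ⟨a, b, c, d, hab, hac, had, hbc, hbd, hcd, rfl⟩ := Finset.card_eq_four.mp hB
  have habcd : a * b * c * d = 1 := by
    simpa [hab, hac, had, hbc, hbd, hcd, mul_assoc] using hprod
  refine isPeriodic_of_forall_mul_mem (g := a * b) ?_ ?_
  · exact fun h => hab (eq_of_mul_eq_one h)
  have mul_a : a * b * a = b := by rw [mul_right_comm, hG, one_mul]
  have mul_b : a * b * b = a := by rw [mul_assoc, hG, mul_one]
  have mul_c : a * b * c = d := eq_of_mul_eq_one habcd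
  have mul_d : a * b * d = c := eq_of_mul_eq_one (by rw [mul_right_comm, habcd])
  simp [mul_a, mul_b, mul_c, mul_d]

end Periodic

lemma IsLogSig.bijective_prod {G : Type*} [CommGroup G] {s : ℕ} {B : Fin s → Finset G}
    (hB : IsLogSig B) : Function.Bijective fun f : (∀ i, B i) => ∏ i, (f i : G) := by
  refine (Function.bijective_iff_existsUnique _).mpr fun g => ?_
  obtain ⟨f, ⟨hf, hprod⟩, hunique⟩ := hB g
  refine ⟨fun i => ⟨f i, hf i⟩, by rw [← hprod, List.prod_ofFn], fun f' hf' => ?_⟩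
  have := hunique (fun i => f' i) ⟨fun i => (f' i).2, by rw [List.prod_ofFn, hf']⟩
  exact funext fun i => Subtype.ext (congrFun this i)

lemma IsLogSig.exists_isPeriodic_of_card_eq_four {G : Type*} [CommGroup G] [DecidableEq G]
    (hG : ∀ g : G, g * g = 1) {s : ℕ} (hs : 0 < s) {B : Fin s → Finset G} (hB : IsLogSig B)
    (hcard : ∀ i, (B i).card = 4) : ∃ i, IsPeriodic (B i) := by
  let _ : Module (ZMod 2) (Additive G) :=
    AddCommGroup.zmodModule fun v => (two_nsmul v).trans (hG v.toMul)
  have : Nonempty (Fin s) := ⟨⟨0, hs⟩⟩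
  let e (i : Fin s) : Fin 4 ≃ B i := ((B i).equivFinOfCardEq (hcard i)).symm
  obtain ⟨i, hi⟩ := exists_sum_eq_zero_of_bijective (V := Additive G)
    (x := fun i m => .ofMul (e i m : G)) (hB.bijective_prod.comp (Equiv.piCongrRight e).bijective)
  have hprod : ∏ b ∈ B i, b = 1 := by
    rw [← Finset.prod_coe_sort, ← (e i).prod_comp]
    exact hi
  exact ⟨i, isPeriodic_of_card_eq_four hG (hcard i) hprod⟩

theorem stmt3_general {G : Type*} [Group G] [DecidableEq G] (hG : ∀ g : G, g * g = 1) {s : ℕ}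
    (hs : 0 < s) {B : Fin s → Finset G} (hB : IsLogSig B) (h2 : ∀ i, 2 ≤ (B i).card)
    (hdvd : ∀ i, (B i).card ∣ 4) : ∃ i, IsPeriodic (B i) := by
  let _ : CommGroup G :=
    { mul_comm := Commute.of_orderOf_dvd_two fun g =>
        orderOf_dvd_of_pow_eq_one ((pow_two g).trans (hG g)) }
  by_cases htwo : ∃ i, (B i).card = 2
  · obtain ⟨i, hi⟩ := htwo
    exact ⟨i, isPeriodic_of_card_eq_two hG hi⟩
  · refine hB.exists_isPeriodic_of_card_eq_four hG hs fun i => ?_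
    have hle := Nat.le_of_dvd four_pos (hdvd i)
    have hne : (B i).card ≠ 2 := fun h => htwo ⟨i, h⟩
    have := h2 i
    have := hdvd i
    interval_cases (B i).card <;> omega

/-- In an elementary abelian 2-group of order `r₁ ⋯ r_s` with `s ≥ 3`,
`r₁ ≥ ⋯ ≥ r_s ≥ 2` and every `r_i ∣ 4`, every logarithmic signature of type
`(r₁, …, r_s)` has a periodic block. -/
theorem stmt3 {G : Type*} [Group G] [Fintype G] [DecidableEq G]
    (hG : ∀ g : G, g * g = 1)
    (s : ℕ) (hs : 3 ≤ s) (r : Fin s → ℕ)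
    (hanti : ∀ i j : Fin s, i ≤ j → r j ≤ r i)
    (h2 : ∀ i, 2 ≤ r i) (hdvd : ∀ i, r i ∣ 4)
    (hcard : Fintype.card G = ∏ i, r i)
    (B : Fin s → Finset G) (hB : IsLogSig B)
    (htype : ∀ i, (B i).card = r i) :
    ∃ i, IsPeriodic (B i) :=
  stmt3_general hG (by omega) hB (fun i => htype i ▸ h2 i) fun i => htype i ▸ hdvd i
end

section
/- Let r_1 ≥ r_2 ≥ 8 be integers and let G be an elementary abelian 2-group of order r_1·r_2. Then there exists an aperiodic logarithmic signature [B_1, B_2] for G of type (r_1, r_2). -/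
/-!
Write `G` additively as `(V × P) × (V × Q)`, where `V` is a field of order `4` and `P`, `Q` are
nontrivial, and let `θ` be multiplication on `V` by an element other than `0` and `1`. The blocks
are the graphs of `f : V × P → V × Q` and `g : V × Q → V × P`, where `f (a, 0) = (a, 0)`,
`g (b, 0) = (θ b, 0)` and both maps vanish elsewhere. The sum of a point of each graph is
`((a, s) + g (b, t), f (a, s) + (b, t))`. It determines `s` and `t`, and then `a` and `b`: only
`s = t = 0` needs an argument, and there `(a, b) ↦ (a + θ b, a + b)` is injective because `θ` has
no nonzero fixed point. A translation preserving the graph of `f` preserves the slice `V × {0}`,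
since otherwise `f` would be constant on it. It then fixes the value `0` taken off the slice, and
as `f` is injective on the slice it is trivial; likewise for `g`. In an elementary abelian group
of odd exponent, `V` can be any field of that characteristic.
-/

theorem isLogSig_pair_iff {G : Type*} [Group G] {A B : Finset G} :
    IsLogSig ![A, B] ↔ ∀ g, ∃! x : G × G, (x.1 ∈ A ∧ x.2 ∈ B) ∧ x.1 * x.2 = g :=
  forall_congr' fun g => (finTwoArrowEquiv G).existsUnique_congr (by simp [Fin.forall_fin_two])

section Graph

variable {G X Y : Type*} [Group G] [DecidableEq G] [AddGroup X] [AddGroup Y] [Fintype X]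

/-- The graph of `f : X → Y`, viewed as a block in `G` through an identification of `X × Y` with
the additive form of `G`. -/
def graphBlock (φ : X × Y ≃+ Additive G) (f : X → Y) : Finset G :=
  Finset.univ.image fun x => (φ (x, f x)).toMul

theorem card_graphBlock (φ : X × Y ≃+ Additive G) (f : X → Y) :
    (graphBlock φ f).card = Fintype.card X :=
  Finset.card_image_of_injective _ fun x x' h => by simp_all

theorem toMul_mem_graphBlock {φ : X × Y ≃+ Additive G} {f : X → Y} {x : X} {y : Y} :
    (φ (x, y)).toMul ∈ graphBlock φ f ↔ f x = y := by
  simp [graphBlock]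

/-- A map whose graph has no translation symmetry: the graph of `f` is invariant under `(u, v)`
only if `u = 0`, which forces `v = 0`. -/
def AperiodicMap {X Y : Type*} [AddGroup X] [AddGroup Y] (f : X → Y) : Prop :=
  ∀ u v, (∀ x, f (u + x) = v + f x) → u = 0

theorem AperiodicMap.not_isPeriodic_graphBlock {f : X → Y} (hf : AperiodicMap f)
    (φ : X × Y ≃+ Additive G) : ¬ IsPeriodic (graphBlock φ f) := by
  rintro ⟨g, hg, hB⟩
  obtain ⟨⟨u, v⟩, rfl⟩ : ∃ w, (φ w).toMul = g := (φ.toEquiv.trans Additive.toMul).surjective g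
  have hshift (x : X) : f (u + x) = v + f x := by
    have hmem : (φ (u, v)).toMul * (φ (x, f x)).toMul ∈ graphBlock φ f := by
      rw [← hB]
      exact Finset.mem_image_of_mem _ (toMul_mem_graphBlock.2 rfl)
    rwa [← toMul_add, ← map_add, Prod.mk_add_mk, toMul_mem_graphBlock] at hmem
  obtain rfl : u = 0 := hf u v hshift
  obtain rfl : v = 0 := by simpa using hshift 0
  exact hg (by simp [← Prod.zero_eq_mk])

theorem isLogSig_graphBlock_pair [Fintype Y] (φ : X × Y ≃+ Additive G) {f : X → Y} {g : Y → X}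
    (h : Function.Bijective fun w : X × Y => (w.1 + g w.2, f w.1 + w.2)) :
    IsLogSig ![graphBlock φ f, graphBlock (AddEquiv.prodComm.trans φ) g] := by
  refine isLogSig_pair_iff.2 fun a => ?_
  have hmul (x : X) (y : Y) : (φ (x, f x)).toMul * (φ (g y, y)).toMul = a ↔
      (x + g y, f x + y) = φ.symm (.ofMul a) := by
    rw [← toMul_add, ← map_add, Prod.mk_add_mk, AddEquiv.eq_symm_apply,
      ← Additive.toMul.injective.eq_iff, toMul_ofMul]
  obtain ⟨⟨x, y⟩, hxy, huniq⟩ := h.existsUnique (φ.symm (.ofMul a))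
  refine ⟨((φ (x, f x)).toMul, (φ (g y, y)).toMul), ⟨?_, (hmul x y).2 hxy⟩, ?_⟩
  · simp [graphBlock]
  · rintro ⟨b, c⟩ ⟨⟨hb, hc⟩, hbc⟩
    obtain ⟨x', -, rfl⟩ := Finset.mem_image.1 hb
    obtain ⟨y', -, rfl⟩ := Finset.mem_image.1 hc
    obtain ⟨rfl, rfl⟩ := Prod.mk.inj (huniq (x', y') ((hmul x' y').1 hbc))
    rfl

end Graph

theorem injective_add_map_add {V : Type*} [AddGroup V] {θ : V →+ V}
    (hfix : ∀ a, θ a = a → a = 0) :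
    Function.Injective fun w : V × V => (w.1 + θ w.2, w.1 + w.2) := by
  rintro ⟨a, b⟩ ⟨a', b'⟩ h
  obtain ⟨hθ, hid⟩ : a + θ b = a' + θ b' ∧ a + b = a' + b' := Prod.mk.inj h
  have hfixed : θ (b' - b) = b' - b := calc
    θ (b' - b) = θ b' - θ b := map_sub θ b' b
    _ = -a' + a := sub_eq_of_eq_add (by rw [add_assoc, hθ, neg_add_cancel_left])
    _ = b' - b := eq_sub_of_add_eq (by rw [add_assoc, hid, neg_add_cancel_left])
  obtain rfl : b' = b := sub_eq_zero.1 (hfix _ hfixed)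
  rw [add_right_cancel hid]

section SliceMap

variable {V W P Q : Type*} [AddGroup V] [AddGroup W] [AddGroup P] [AddGroup Q]
  [DecidableEq P]

/-- The map `V × P → W × Q` that applies `θ` on the slice `V × {0}` and vanishes off it. -/
def sliceMap (θ : V →+ W) (x : V × P) : W × Q :=
  (if x.2 = 0 then θ x.1 else 0, 0)

theorem aperiodicMap_sliceMap [Nontrivial V] [Nontrivial P] {θ : V →+ W}
    (hθ : Function.Injective θ) : AperiodicMap (sliceMap θ : V × P → W × Q) := by
  rintro ⟨u, p⟩ v h
  have hfst (a : V) (q : P) : (if p + q = 0 then θ (u + a) else 0) =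
      v.1 + if q = 0 then θ a else 0 := congrArg Prod.fst (h (a, q))
  obtain ⟨a, ha⟩ := exists_ne (0 : V)
  obtain ⟨q, hq⟩ := exists_ne (0 : P)
  obtain rfl : p = 0 := by
    by_contra hp
    have hv : v.1 = 0 := by simpa [hp] using (hfst 0 0).symm
    have hθa : θ a = 0 := by simpa [hp, hv] using (hfst a 0).symm
    exact ha ((map_eq_zero_iff θ hθ).1 hθa)
  have hv : v.1 = 0 := by simpa [hq] using (hfst 0 q).symm
  have hθu : θ u = 0 := by simpa [hv] using hfst 0 0
  simpa using (map_eq_zero_iff θ hθ).1 hθu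

theorem injective_sliceMap_pair [DecidableEq Q] {θ : V →+ V} (hfix : ∀ a, θ a = a → a = 0) :
    Function.Injective fun w : (V × P) × (V × Q) =>
      (w.1 + sliceMap θ w.2, sliceMap (AddMonoidHom.id V) w.1 + w.2) := by
  rintro ⟨⟨a, p⟩, b, q⟩ ⟨⟨a', p'⟩, b', q'⟩ h
  simp only [sliceMap, Prod.mk_add_mk, Prod.mk.injEq, add_zero, zero_add,
    AddMonoidHom.id_apply] at h
  obtain ⟨⟨ha, rfl⟩, hb, rfl⟩ := h
  by_cases hp : p = 0 <;> by_cases hq : q = 0 <;>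
    simp only [hp, hq, if_true, if_false, add_zero, zero_add] at ha hb
  · obtain ⟨rfl, rfl⟩ := Prod.mk.inj (injective_add_map_add hfix (a₁ := (a, b)) (a₂ := (a', b'))
      (Prod.ext ha hb))
    rfl
  · rw [ha] at hb ⊢
    rw [add_left_cancel hb]
  · rw [hb] at ha ⊢
    rw [add_right_cancel ha]
  · rw [ha, hb]

end SliceMap

theorem exists_aperiodic_isLogSig_of_addEquiv {G V P Q : Type*} [Group G] [DecidableEq G]
    [AddGroup V] [AddGroup P] [AddGroup Q] [Finite V] [Finite P] [Finite Q]
    [Nontrivial V] [Nontrivial P] [Nontrivial Q] (φ : (V × P) × (V × Q) ≃+ Additive G)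
    {θ : V →+ V} (hθ : Function.Injective θ) (hfix : ∀ a, θ a = a → a = 0) :
    ∃ B : Fin 2 → Finset G, IsLogSig B ∧ (B 0).card = Nat.card (V × P) ∧
      (B 1).card = Nat.card (V × Q) ∧ ∀ i, ¬ IsPeriodic (B i) := by
  classical
  have := Fintype.ofFinite (V × P)
  have := Fintype.ofFinite (V × Q)
  let f : V × P → V × Q := sliceMap (AddMonoidHom.id V)
  let g : V × Q → V × P := sliceMap θ
  refine ⟨![graphBlock φ f, graphBlock (AddEquiv.prodComm.trans φ) g],
    isLogSig_graphBlock_pair φ (Finite.injective_iff_bijective.1 (injective_sliceMap_pair hfix)),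
    (card_graphBlock φ f).trans Fintype.card_eq_nat_card,
    (card_graphBlock _ g).trans Fintype.card_eq_nat_card, Fin.forall_fin_two.2 ⟨?_, ?_⟩⟩
  · exact (aperiodicMap_sliceMap Function.injective_id).not_isPeriodic_graphBlock φ
  · exact (aperiodicMap_sliceMap hθ).not_isPeriodic_graphBlock _

theorem nonempty_linearEquiv_of_natCard_eq {K V W : Type*} [DivisionRing K] [Finite K]
    [AddCommGroup V] [Module K V] [Finite V] [AddCommGroup W] [Module K W] [Finite W]
    (h : Nat.card V = Nat.card W) : Nonempty (V ≃ₗ[K] W) := by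
  rw [Module.natCard_eq_pow_finrank (K := K), Module.natCard_eq_pow_finrank (K := K) (V := W)] at h
  exact FiniteDimensional.nonempty_linearEquiv_of_finrank_eq
    (Nat.pow_right_injective Finite.one_lt_card h)

theorem exists_addMonoidHom_injective_fixedPointFree {K : Type*} [Ring K] [IsDomain K]
    (hK : 3 ≤ ENat.card K) :
    ∃ θ : K →+ K, Function.Injective θ ∧ ∀ a, θ a = a → a = 0 := by
  obtain ⟨c, hc0, hc1⟩ := ENat.exists_ne_ne_of_three_le hK 0 1
  refine ⟨AddMonoidHom.mulLeft c, mul_right_injective₀ hc0, fun a ha => ?_⟩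
  by_contra ha0
  exact hc1 ((mul_eq_right₀ ha0).1 ha)

theorem exists_eq_pow_mul_pow_succ {p k n r : ℕ} (hp : p.Prime) (hr : r ∣ p ^ n)
    (hk : p ^ k < r) : ∃ a, r = p ^ k * p ^ (a + 1) := by
  obtain ⟨m, -, rfl⟩ := (Nat.dvd_prime_pow hp).1 hr
  obtain ⟨a, rfl⟩ := Nat.exists_eq_add_of_lt ((Nat.pow_lt_pow_iff_right hp.one_lt).1 hk)
  exact ⟨a, by rw [add_assoc, pow_add]⟩

theorem stmt4_general {G : Type*} [CommGroup G] [DecidableEq G] {p : ℕ} [Fact p.Prime]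
    (hG : ∀ g : G, g ^ p = 1) {k r₁ r₂ : ℕ} (hk : 3 ≤ p ^ k) (h₁ : p ^ k < r₁) (h₂ : p ^ k < r₂)
    (hcard : Nat.card G = r₁ * r₂) :
    ∃ B : Fin 2 → Finset G, IsLogSig B ∧ (B 0).card = r₁ ∧ (B 1).card = r₂ ∧
      ∀ i, ¬ IsPeriodic (B i) := by
  have hp : p.Prime := Fact.out
  have hk0 : k ≠ 0 := by rintro rfl; simp at hk
  have : Finite G := Nat.finite_of_card_ne_zero <| by
    rw [hcard]; exact Nat.mul_ne_zero h₁.ne_bot h₂.ne_bot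
  obtain ⟨n, hn⟩ := IsPGroup.exists_card_eq (p := p) (G := G) fun g => ⟨1, by rw [pow_one, hG]⟩
  rw [hcard] at hn
  obtain ⟨a, rfl⟩ := exists_eq_pow_mul_pow_succ hp (hn ▸ Nat.dvd_mul_right r₁ r₂) h₁
  obtain ⟨b, rfl⟩ := exists_eq_pow_mul_pow_succ hp (hn ▸ Nat.dvd_mul_left r₂ _) h₂
  let K := GaloisField p k
  have hKcard : Nat.card K = p ^ k := GaloisField.card p k hk0
  have hK3 : 3 ≤ ENat.card K := by rw [ENat.card_eq_coe_natCard, hKcard]; exact_mod_cast hk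
  obtain ⟨θ, hθ, hfix⟩ := exists_addMonoidHom_injective_fixedPointFree hK3
  have : Module (ZMod p) (Additive G) := AddCommGroup.zmodModule hG
  have hprod (m : ℕ) : Nat.card (K × (Fin m → ZMod p)) = p ^ k * p ^ m := by simp [hKcard]
  obtain ⟨φ⟩ := nonempty_linearEquiv_of_natCard_eq (K := ZMod p)
    (V := (K × (Fin (a + 1) → ZMod p)) × (K × (Fin (b + 1) → ZMod p))) (W := Additive G)
    (by rw [Nat.card_prod, hprod, hprod, Nat.card_congr Additive.toMul, hcard])
  simpa only [hprod] using exists_aperiodic_isLogSig_of_addEquiv φ.toAddEquiv hθ hfix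

/-- Every elementary abelian 2-group of order `r₁ r₂` with `r₁ ≥ r₂ ≥ 8` has an
aperiodic logarithmic signature of type `(r₁, r₂)`. -/
theorem stmt4 {G : Type*} [Group G] [Fintype G] [DecidableEq G]
    (hG : ∀ g : G, g * g = 1)
    (r₁ r₂ : ℕ) (h21 : r₂ ≤ r₁) (h8 : 8 ≤ r₂)
    (hcard : Fintype.card G = r₁ * r₂) :
    ∃ B : Fin 2 → Finset G, IsLogSig B ∧ (B 0).card = r₁ ∧ (B 1).card = r₂ ∧
      ∀ i, ¬ IsPeriodic (B i) := by
  let _ : CommGroup G :=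
    { mul_comm := Commute.of_orderOf_dvd_two fun g => orderOf_dvd_of_pow_eq_one (sq g ▸ hG g) }
  exact stmt4_general (p := 2) (k := 2) (fun g => sq g ▸ hG g) (by norm_num) (by lia) (by lia)
    (Nat.card_eq_fintype_card.trans hcard)
end
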